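/- A choice rule C on a finite set 𝒳 of contracts satisfies path independence and the law of aggregate demand if and only if there exists a utility function u : 2^𝒳 → ℝ that rationalizes C and satisfies both ordinal concavity and size-restricted concavity. -/

import Mathlib

/-!
Rationalizability implies path independence and the law of aggregate demand by comparing two
chosen sets: since a chosen set is the *strict* maximizer of `u` among the available sets, every
alternative offered by the concavity conditions is contradictory.

For the converse, path independence yields an Aizerman–Malishevski representation
(`exists_rankings`): finitely many rankings `v i : α → ℕ`, injective on their positive part, such
that `C X` consists exactly of the contracts which are the positive strict maximum over `X` of some
ranking. Let `u` order the sets lexicographically by the maxima of `v 0`, `v 1`, … over the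
set, with ties broken in favour of smaller sets (`utilityKey`). Then

* dropping a contract rejected from `X` improves `X` (the maxima are unchanged);
* adding to `X` a contract that is chosen from the enlarged set improves `X`;
* if `x` is chosen from `X` but rejected from `X' + x`, consider the first ranking for which `x` is
  the strict maximum of `X`; some `x' ∈ X'` is ranked above `x` there, and `X - x + x'` beats `X`.

These give ordinal concavity. If size-restricted concavity failed for `X`, `X'`, then every element
of `X \ X'` would be chosen from `X` and rejected when added to `X'`. Hence
`C (X ∪ X') = C X'`, so `|C X| ≤ |C X'|`, while `X \ C X ⊆ X' \ C X'`; so `|X| ≤ |X'|`.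
-/


open Finset

variable {α : Type*} [DecidableEq α] [Fintype α]

/-- `X − x + x'`, where `x'` may be `∅` (encoded as `none`). -/
def swapIn (X : Finset α) (x : α) (x' : Option α) : Finset α :=
  x'.elim (X.erase x) (fun a => insert a (X.erase x))

/-- `X' + x − x'`, where `x'` may be `∅` (encoded as `none`). -/
def swapOut (X' : Finset α) (x : α) (x' : Option α) : Finset α :=
  x'.elim (insert x X') (fun a => (insert x X').erase a)

/-- A choice rule selects a subset of every available set. -/
def IsChoiceRule (C : Finset α → Finset α) : Prop :=
  ∀ X : Finset α, C X ⊆ X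

def PathIndependent (C : Finset α → Finset α) : Prop :=
  ∀ X X' : Finset α, C (X ∪ X') = C (C X ∪ X')

def LawOfAggregateDemand (C : Finset α → Finset α) : Prop :=
  ∀ X X' : Finset α, X' ⊆ X → (C X').card ≤ (C X).card

def Rationalizes (u : Finset α → ℝ) (C : Finset α → Finset α) : Prop :=
  ∀ X X' : Finset α, X' ⊆ X → X' ≠ C X → u X' < u (C X)

def OrdinalConcave (u : Finset α → ℝ) : Prop :=
  ∀ X X' : Finset α, ∀ x ∈ X \ X', ∃ x' : Option α,
    (∀ a : α, x' = some a → a ∈ X' \ X) ∧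
    (u X < u (swapIn X x x') ∨ u X' < u (swapOut X' x x') ∨
      (u X = u (swapIn X x x') ∧ u X' = u (swapOut X' x x')))

def OrdinalConcavePlus (u : Finset α → ℝ) : Prop :=
  ∀ X X' : Finset α, ∀ x ∈ X \ X',
    (∃ x' : Option α, (∀ a : α, x' = some a → a ∈ X' \ X) ∧ u X < u (swapIn X x x')) ∨
    u X' < u (insert x X')

def SizeRestrictedConcave (u : Finset α → ℝ) : Prop :=
  ∀ X X' : Finset α, X'.card < X.card → ∃ x ∈ X \ X',
    (u X < u (X.erase x) ∨ u X' < u (insert x X') ∨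
      (u X = u (X.erase x) ∧ u X' = u (insert x X')))

def MNatConcave (u : Finset α → ℝ) : Prop :=
  ∀ X X' : Finset α, ∀ x ∈ X \ X', ∃ x' : Option α,
    (∀ a : α, x' = some a → a ∈ X' \ X) ∧
    u X + u X' ≤ u (swapIn X x x') + u (swapOut X' x x')

def Substitutes (C : Finset α → Finset α) : Prop :=
  ∀ X X' : Finset α, X ⊆ X' → C X' ∩ X ⊆ C X

def IrrelevanceOfRejectedContracts (C : Finset α → Finset α) : Prop :=
  ∀ X X' : Finset α, X ⊆ X' → C X' ⊆ X → C X = C X'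

set_option linter.unusedSectionVars false

/-! ### Path independence, substitutes and irrelevance of rejected contracts -/

theorem PathIndependent.substitutes {C : Finset α → Finset α} (hC : IsChoiceRule C)
    (h : PathIndependent C) : Substitutes C := by
  intro X X' hXX' x hx
  rw [mem_inter] at hx
  have h1 := h X (X' \ X)
  rw [union_sdiff_of_subset hXX'] at h1
  have h2 := hC _ (h1 ▸ hx.1)
  simp only [mem_union, mem_sdiff] at h2
  tauto

theorem PathIndependent.irrelevance {C : Finset α → Finset α}
    (h : PathIndependent C) : IrrelevanceOfRejectedContracts C := by
  intro X X' hXX' hCX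
  have h1 := h X' X
  rw [union_eq_left.2 hXX', union_eq_right.2 hCX] at h1
  exact h1.symm

theorem pathIndependent_of {C : Finset α → Finset α} (hC : IsChoiceRule C)
    (hs : Substitutes C) (hi : IrrelevanceOfRejectedContracts C) : PathIndependent C := by
  intro X X'
  refine (hi _ _ (union_subset_union_left (hC X)) ?_).symm
  intro y hy
  by_cases hyX : y ∈ X
  · exact mem_union_left _ (hs X _ subset_union_left (mem_inter.2 ⟨hy, hyX⟩))
  · have := hC _ hy
    simp only [mem_union] at this ⊢
    tauto

/-! ### Concave rationalizations give path independence and the law of aggregate demand -/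

theorem Rationalizes.le {u : Finset α → ℝ} {C : Finset α → Finset α} (h : Rationalizes u C)
    {X X' : Finset α} (hX : X' ⊆ X) : u X' ≤ u (C X) := by
  by_cases he : X' = C X
  · rw [he]
  · exact (h X X' hX he).le

theorem Rationalizes.irrelevance {u : Finset α → ℝ} {C : Finset α → Finset α}
    (hC : IsChoiceRule C) (h : Rationalizes u C) : IrrelevanceOfRejectedContracts C := by
  intro X X' hXX' hCX
  by_contra hne
  have h1 := h X' (C X) ((hC X).trans hXX') hne
  have h2 := h.le hCX
  linarith

theorem Rationalizes.substitutes {u : Finset α → ℝ} {C : Finset α → Finset α}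
    (hC : IsChoiceRule C) (h : Rationalizes u C) (hu : OrdinalConcave u) : Substitutes C := by
  intro X X' hXX' x hx
  rw [mem_inter] at hx
  by_contra hxC
  obtain ⟨x', hx', hcase⟩ := hu (C X') (C X) x (mem_sdiff.2 ⟨hx.1, hxC⟩)
  have hin : swapIn (C X') x x' ⊆ X' ∧ swapIn (C X') x x' ≠ C X' := by
    cases x' with
    | none =>
      exact ⟨(erase_subset _ _).trans (hC _), fun he => notMem_erase x (C X') (by
        have h3 := hx.1
        rw [← he] at h3
        exact h3)⟩
    | some a =>
      have ha := mem_sdiff.1 (hx' a rfl)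
      refine ⟨insert_subset (hXX' (hC _ ha.1)) ((erase_subset _ _).trans (hC _)), fun he => ?_⟩
      exact ha.2 (he ▸ mem_insert_self a _)
  have hout : swapOut (C X) x x' ⊆ X := by
    cases x' with
    | none => exact insert_subset hx.2 (hC _)
    | some a => exact (erase_subset _ _).trans (insert_subset hx.2 (hC _))
  have h1 := h X' _ hin.1 hin.2
  have h2 := h.le hout
  rcases hcase with h3 | h3 | h3
  · linarith
  · linarith
  · linarith [h3.1]

theorem Rationalizes.lawOfAggregateDemand {u : Finset α → ℝ} {C : Finset α → Finset α}
    (hC : IsChoiceRule C) (h : Rationalizes u C) (hu : SizeRestrictedConcave u) :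
    LawOfAggregateDemand C := by
  intro X X' hXX'
  by_contra hlt
  obtain ⟨x, hx, hcase⟩ := hu (C X') (C X) (not_le.1 hlt)
  rw [mem_sdiff] at hx
  have h1 := h X' ((C X').erase x) ((erase_subset _ _).trans (hC _))
    (fun he => notMem_erase x (C X') (he.symm ▸ hx.1))
  have h2 := h.le (insert_subset (hXX' (hC _ hx.1)) (hC X))
  rcases hcase with h3 | h3 | h3
  · linarith
  · linarith
  · linarith [h3.1]

/-! ### Rankings compatible with a path-independent choice rule -/

/-- A ranking of the contracts compatible with `C` on subsets of `R`: value `0` means unacceptable,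
distinct contracts with positive value have distinct values, and whenever a contract of positive
value is the strict maximum of some `X ⊆ R`, it is chosen from `X`. The bound by `|R|` leaves room
for a new top contract. -/
structure IsRanking (C : Finset α → Finset α) (R : Finset α) (v : α → ℕ) : Prop where
  le_card : ∀ x, v x ≤ R.card
  eq_of_eq : ∀ x y, 0 < v x → v x = v y → x = y
  mem_choice : ∀ X ⊆ R, ∀ x ∈ X, 0 < v x → (∀ z ∈ X, z ≠ x → v z < v x) → x ∈ C X

/-- A contract chosen from `R` may be placed on top of a ranking of `R - y`: by substitutes it is
chosen from every subset of `R` containing it. -/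
theorem IsRanking.update {C : Finset α → Finset α} (hs : Substitutes C) {R : Finset α}
    {v : α → ℕ} {y : α} (hyR : y ∈ R) (hy : y ∈ C R) (hv : IsRanking C (R.erase y) v) :
    IsRanking C R (Function.update v y R.card) := by
  have hcard := card_erase_add_one hyR
  have hlt : ∀ x, v x < R.card := fun x => by
    have := hv.le_card x
    omega
  refine ⟨fun x => ?_, fun x z hx hxz => ?_, fun X hX x hx h0 hmax => ?_⟩
  · by_cases hxy : x = y
    · simp [hxy]
    · simpa [hxy] using (hlt x).le
  · have h1 := hlt x
    have h2 := hlt z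
    by_cases hxy : x = y <;> by_cases hzy : z = y
    · rw [hxy, hzy]
    · subst hxy
      simp [hzy] at hxz
      omega
    · subst hzy
      simp [hxy] at hxz
      omega
    · simp [hxy, hzy] at hx hxz
      exact hv.eq_of_eq x z (by omega) hxz
  · by_cases hyX : y ∈ X
    · have hxy : x = y := by
        by_contra hxy
        have h1 := hmax y hyX (Ne.symm hxy)
        have h2 := hlt x
        simp [hxy] at h1
        omega
      subst hxy
      exact hs X R hX (mem_inter.2 ⟨hy, hyX⟩)
    · have hne : ∀ z ∈ X, z ≠ y := fun z hz he => hyX (he ▸ hz)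
      refine hv.mem_choice X (fun z hz => mem_erase.2 ⟨hne z hz, hX hz⟩) x hx ?_ ?_
      · simpa [hne x hx] using h0
      · intro z hz hzx
        simpa [hne x hx, hne z hz] using hmax z hz hzx

theorem isRanking_zero (C : Finset α → Finset α) (R : Finset α) : IsRanking C R (fun _ => 0) :=
  ⟨fun _ => Nat.zero_le _, fun _ _ h => absurd h (lt_irrefl _),
    fun _ _ _ _ h => absurd h (lt_irrefl _)⟩

/-- Every choice is explained by some ranking: if `x ∈ C X`, contracts outside `X` are peeled off
from the top, each time taking one chosen from what remains, until `x` itself is chosen. -/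
theorem exists_isRanking {C : Finset α → Finset α} (hC : IsChoiceRule C) (hs : Substitutes C)
    (hi : IrrelevanceOfRejectedContracts C) {X : Finset α} {x : α} (hx : x ∈ C X) :
    ∀ R : Finset α, X ⊆ R →
      ∃ v, IsRanking C R v ∧ 0 < v x ∧ ∀ z ∈ X, z ≠ x → v z < v x := by
  intro R
  induction R using Finset.strongInduction with
  | H R ih =>
  intro hXR
  by_cases hxR : x ∈ C R
  · have hmem := hC _ hxR
    refine ⟨_, (isRanking_zero C (R.erase x)).update hs hmem hxR, ?_, fun z _ hzx => ?_⟩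
    · simpa using ⟨x, hmem⟩
    · simpa [hzx] using ⟨x, hmem⟩
  · obtain ⟨y, hyC, hyX⟩ : ∃ y ∈ C R, y ∉ X := by
      by_contra! hsub
      exact hxR (hi X R hXR hsub ▸ hx)
    have hyR := hC _ hyC
    have hne : ∀ z ∈ X, z ≠ y := fun z hz he => hyX (he ▸ hz)
    obtain ⟨v, hv, h0, hmax⟩ := ih (R.erase y) (erase_ssubset hyR)
      (fun z hz => mem_erase.2 ⟨hne z hz, hXR hz⟩)
    have hxy := hne x (hC _ hx)
    refine ⟨_, hv.update hs hyR hyC, by simpa [hxy] using h0, fun z hz hzx => ?_⟩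
    simpa [hxy, hne z hz] using hmax z hz hzx

/-- Aizerman–Malishevski representation by finitely many rankings. -/
theorem exists_rankings {C : Finset α → Finset α} (hC : IsChoiceRule C) (hs : Substitutes C)
    (hi : IrrelevanceOfRejectedContracts C) :
    ∃ (k : ℕ) (v : Fin k → α → ℕ), (∀ i, IsRanking C univ (v i)) ∧
      ∀ X, ∀ x ∈ C X, ∃ i, 0 < v i x ∧ ∀ z ∈ X, z ≠ x → v i z < v i x := by
  have key : ∀ p : Finset α × α, ∃ v, IsRanking C univ v ∧
      (p.2 ∈ C p.1 → 0 < v p.2 ∧ ∀ z ∈ p.1, z ≠ p.2 → v z < v p.2) := by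
    intro p
    by_cases hp : p.2 ∈ C p.1
    · obtain ⟨v, hv, h⟩ := exists_isRanking hC hs hi hp univ (subset_univ _)
      exact ⟨v, hv, fun _ => h⟩
    · exact ⟨_, isRanking_zero C univ, fun h => absurd h hp⟩
  choose w hw hw' using key
  let e := Fintype.equivFin (Finset α × α)
  refine ⟨_, fun i => w (e.symm i), fun i => hw _, fun X x hx => ⟨e (X, x), ?_⟩⟩
  simpa using hw' (X, x) hx

/-! ### The lexicographic utility -/

/-- The utility of `X` as an element of a linear order: the vector of the maxima of the rankings
over `X` (`0` for the empty set), compared lexicographically, and then the size of `X`, smaller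
being better. -/
def utilityKey {k : ℕ} (v : Fin k → α → ℕ) (X : Finset α) : Lex (Fin k → ℕ) ×ₗ ℕᵒᵈ :=
  toLex (toLex (fun i => X.sup (v i)), OrderDual.toDual X.card)

/-- A function into a linear order on a finite type can be replaced by a real-valued one inducing
the same strict comparisons, namely the number of points with smaller value. -/
theorem exists_real_of_linearOrder {β L : Type*} [Fintype β] [LinearOrder L] (f : β → L) :
    ∃ u : β → ℝ, ∀ a b, f a < f b → u a < u b := by
  refine ⟨fun a => ((univ.filter fun c => f c < f a).card : ℝ), fun a b hab => ?_⟩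
  refine Nat.cast_lt.2 (card_lt_card ((ssubset_iff_of_subset fun c hc => ?_).2 ⟨a, ?_, ?_⟩))
  · simp only [mem_filter, mem_univ, true_and] at hc ⊢
    exact hc.trans hab
  · simpa using hab
  · simp

theorem toLex_lt_of_first {k : ℕ} {a b : Fin k → ℕ} (i : Fin k) (hi : a i < b i)
    (h : ∀ j < i, a j ≤ b j) : toLex a < toLex b := by
  induction i using WellFoundedLT.induction with
  | ind i ih =>
  by_cases hj : ∃ j < i, a j < b j
  · obtain ⟨j, hji, hab⟩ := hj
    exact ih j hji hab fun l hl => h l (hl.trans hji)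
  · push Not at hj
    exact ⟨i, fun j hji => le_antisymm (h j hji) (hj j hji), hi⟩

theorem utilityKey_lt_of_first {k : ℕ} {v : Fin k → α → ℕ} {X Y : Finset α} (i : Fin k)
    (hi : X.sup (v i) < Y.sup (v i)) (h : ∀ j < i, X.sup (v j) ≤ Y.sup (v j)) :
    utilityKey v X < utilityKey v Y :=
  Prod.Lex.toLex_lt_toLex.2 (Or.inl (toLex_lt_of_first i hi h))

theorem utilityKey_lt_erase {C : Finset α → Finset α} {k : ℕ} {v : Fin k → α → ℕ}
    (hv : ∀ i, IsRanking C univ (v i)) {X : Finset α} {x : α} (hx : x ∈ X) (hxC : x ∉ C X) :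
    utilityKey v X < utilityKey v (X.erase x) := by
  have hsup : ∀ i, X.sup (v i) = (X.erase x).sup (v i) := by
    intro i
    refine le_antisymm (Finset.sup_le fun y hy => ?_) (sup_mono (erase_subset _ _))
    by_cases hyx : y = x
    · subst hyx
      rcases Nat.eq_zero_or_pos (v i y) with h0 | h0
      · simp [h0]
      · by_contra hlt
        refine hxC ((hv i).mem_choice X (subset_univ _) y hx h0 fun z hz hzy => ?_)
        exact (le_sup (f := v i) (mem_erase.2 ⟨hzy, hz⟩)).trans_lt (not_le.1 hlt)
    · exact le_sup (f := v i) (mem_erase.2 ⟨hyx, hy⟩)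
  refine Prod.Lex.toLex_lt_toLex.2 (Or.inr ⟨?_, ?_⟩)
  · exact congrArg toLex (funext hsup)
  · exact OrderDual.toDual_lt_toDual.2 (card_erase_lt_of_mem hx)

theorem sup_lt_of_strict_max {w : α → ℕ} {Y : Finset α} {x : α} (hxY : x ∉ Y) (h0 : 0 < w x)
    (h : ∀ z ∈ insert x Y, z ≠ x → w z < w x) : Y.sup w < w x :=
  (Finset.sup_lt_iff h0).2 fun z hz => h z (mem_insert_of_mem hz) fun he => hxY (he ▸ hz)

theorem utilityKey_lt_insert {C : Finset α → Finset α} {k : ℕ} {v : Fin k → α → ℕ}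
    (hmax : ∀ X, ∀ x ∈ C X, ∃ i, 0 < v i x ∧ ∀ z ∈ X, z ≠ x → v i z < v i x)
    {X : Finset α} {x : α} (hx : x ∉ X) (hxC : x ∈ C (insert x X)) :
    utilityKey v X < utilityKey v (insert x X) := by
  obtain ⟨i, h0, hi⟩ := hmax _ x hxC
  refine utilityKey_lt_of_first i ?_ fun j _ => sup_mono (subset_insert _ _)
  exact (sup_lt_of_strict_max hx h0 hi).trans_le (le_sup (f := v i) (mem_insert_self x X))

theorem exists_utilityKey_lt_swap {C : Finset α → Finset α} {k : ℕ} {v : Fin k → α → ℕ}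
    (hv : ∀ i, IsRanking C univ (v i))
    (hmax : ∀ X, ∀ x ∈ C X, ∃ i, 0 < v i x ∧ ∀ z ∈ X, z ≠ x → v i z < v i x)
    {X X' : Finset α} {x : α} (hx : x ∈ X) (hxC : x ∈ C X)
    (hxC' : x ∉ C (insert x X')) :
    ∃ x' ∈ X' \ X, utilityKey v X < utilityKey v (insert x' (X.erase x)) := by
  have hex : ∃ i, (X.erase x).sup (v i) < v i x := by
    obtain ⟨i, h0, hi⟩ := hmax _ x hxC
    exact ⟨i, sup_lt_of_strict_max (notMem_erase x X) h0 (by rwa [insert_erase hx])⟩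
  -- The first ranking for which `x` is the strict maximum of `X`.
  obtain ⟨i, hi, hfirst⟩ := WellFounded.has_min (wellFounded_lt (α := Fin k))
    {i | (X.erase x).sup (v i) < v i x} hex
  simp only [Set.mem_ofPred_eq, not_lt] at hi hfirst
  have h0 : 0 < v i x := (Nat.zero_le _).trans_lt hi
  obtain ⟨x', hx', hne, hge⟩ : ∃ z ∈ insert x X', z ≠ x ∧ v i x ≤ v i z := by
    by_contra! hcon
    exact hxC' ((hv i).mem_choice _ (subset_univ _) x (mem_insert_self _ _) h0 hcon)
  have hgt : v i x < v i x' :=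
    lt_of_le_of_ne hge fun he => hne ((hv i).eq_of_eq x x' h0 he).symm
  have hsup : ∀ j, X.sup (v j) = v j x ⊔ (X.erase x).sup (v j) := fun j => by
    rw [← sup_insert, insert_erase hx]
  refine ⟨x', mem_sdiff.2 ⟨(mem_insert.1 hx').resolve_left hne, fun hX => ?_⟩,
    utilityKey_lt_of_first i ?_ fun j hj => ?_⟩
  · have := le_sup (f := v i) (mem_erase.2 ⟨hne, hX⟩)
    omega
  · rw [hsup, sup_of_le_left hi.le]
    exact hgt.trans_le (le_sup (f := v i) (mem_insert_self _ _))
  · rw [hsup, sup_of_le_right (not_lt.1 fun hlt => absurd hj (not_lt.2 (hfirst j hlt)))]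
    exact sup_mono (subset_insert _ _)

/-- Counting step for size-restricted concavity: if every contract of `X \ X'` is chosen from `X`
and rejected when added to `X'`, then `X` is no larger than `X'`. -/
theorem card_le_of_rejected {C : Finset α → Finset α} (hC : IsChoiceRule C) (hs : Substitutes C)
    (hi : IrrelevanceOfRejectedContracts C) (hl : LawOfAggregateDemand C) {X X' : Finset α}
    (h1 : ∀ x ∈ X \ X', x ∈ C X) (h2 : ∀ x ∈ X \ X', x ∉ C (insert x X')) :
    X.card ≤ X'.card := by
  have hU : C X' = C (X ∪ X') := by
    refine hi _ _ subset_union_right fun y hy => ?_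
    by_contra hyX'
    have hyX : y ∈ X := (mem_union.1 (hC _ hy)).resolve_right hyX'
    exact h2 y (mem_sdiff.2 ⟨hyX, hyX'⟩)
      (hs _ _ (insert_subset (mem_union_left _ hyX) subset_union_right)
        (mem_inter.2 ⟨hy, mem_insert_self _ _⟩))
  have hle : (C X).card ≤ (C X').card := hU ▸ hl _ _ subset_union_left
  have hsub : X \ C X ⊆ X' \ C X' := by
    intro z hz
    rw [mem_sdiff] at hz ⊢
    refine ⟨?_, fun hzC => ?_⟩
    · by_contra hzX'
      exact hz.2 (h1 z (mem_sdiff.2 ⟨hz.1, hzX'⟩))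
    · exact hz.2 (hs X _ subset_union_left (mem_inter.2 ⟨hU ▸ hzC, hz.1⟩))
  have := card_le_card hsub
  have := card_sdiff_add_card_eq_card (hC X)
  have := card_sdiff_add_card_eq_card (hC X')
  omega

/-- If `X' ⊆ X` is not `C X`, some single-contract change inside `X` improves `X'`; so `C X` is the
unique maximizer among the subsets of `X`. -/
theorem rationalizes_of_improvements {C : Finset α → Finset α} (hC : IsChoiceRule C)
    (hs : Substitutes C) (hi : IrrelevanceOfRejectedContracts C) {u : Finset α → ℝ}
    (hdrop : ∀ X, ∀ x ∈ X, x ∉ C X → u X < u (X.erase x))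
    (hadd : ∀ X, ∀ x ∉ X, x ∈ C (insert x X) → u X < u (insert x X)) : Rationalizes u C := by
  intro X X' hX hne
  obtain ⟨M, hM, hMmax⟩ := exists_max_image X.powerset u ⟨∅, empty_mem_powerset X⟩
  rw [mem_powerset] at hM
  have uniq : ∀ Y ⊆ X, (∀ Z ⊆ X, u Z ≤ u Y) → Y = C X := by
    intro Y hY hYmax
    have hsub : C X ⊆ Y := by
      intro x hx
      by_contra hxY
      have hins : insert x Y ⊆ X := insert_subset (hC _ hx) hY
      have := hadd Y x hxY (hs _ _ hins (mem_inter.2 ⟨hx, mem_insert_self _ _⟩))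
      linarith [hYmax _ hins]
    refine Subset.antisymm (fun x hx => ?_) hsub
    by_contra hxC
    have := hdrop Y x hx (by rwa [hi Y X hY hsub])
    linarith [hYmax _ ((erase_subset x Y).trans hY)]
  have hMC := uniq M hM fun Z hZ => hMmax Z (mem_powerset.2 hZ)
  rw [← hMC] at hne ⊢
  refine lt_of_le_of_ne (hMmax X' (mem_powerset.2 hX)) fun he => hne ?_
  rw [hMC]
  exact uniq X' hX fun Z hZ => he ▸ hMmax Z (mem_powerset.2 hZ)

theorem stmt3 (C : Finset α → Finset α) (hC : IsChoiceRule C) :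
    (PathIndependent C ∧ LawOfAggregateDemand C) ↔
      ∃ u : Finset α → ℝ, Rationalizes u C ∧ OrdinalConcave u ∧ SizeRestrictedConcave u := by
  constructor
  · rintro ⟨hp, hl⟩
    have hs := hp.substitutes hC
    have hi := hp.irrelevance
    obtain ⟨k, v, hv, hmax⟩ := exists_rankings hC hs hi
    obtain ⟨u, hu⟩ := exists_real_of_linearOrder (utilityKey v)
    have hdrop : ∀ X, ∀ x ∈ X, x ∉ C X → u X < u (X.erase x) :=
      fun X x hx hxC => hu _ _ (utilityKey_lt_erase hv hx hxC)
    have hadd : ∀ X, ∀ x ∉ X, x ∈ C (insert x X) → u X < u (insert x X) :=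
      fun X x hx hxC => hu _ _ (utilityKey_lt_insert hmax hx hxC)
    refine ⟨u, rationalizes_of_improvements hC hs hi hdrop hadd, ?_, ?_⟩
    · intro X X' x hx
      rw [mem_sdiff] at hx
      by_cases h1 : x ∈ C X
      · by_cases h2 : x ∈ C (insert x X')
        · exact ⟨none, by simp, Or.inr (Or.inl (hadd X' x hx.2 h2))⟩
        · obtain ⟨x', hx', hlt⟩ := exists_utilityKey_lt_swap hv hmax hx.1 h1 h2
          refine ⟨some x', fun a ha => ?_, Or.inl (hu _ _ hlt)⟩
          rwa [← Option.some.inj ha]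
      · exact ⟨none, by simp, Or.inl (hdrop X x hx.1 h1)⟩
    · intro X X' hcard
      by_contra! hcon
      refine absurd (card_le_of_rejected hC hs hi hl (X := X) (X' := X') ?_ ?_) (not_le.2 hcard)
      · intro x hx
        by_contra hxC
        exact absurd (hdrop X x (mem_sdiff.1 hx).1 hxC) (not_lt.2 (hcon x hx).1)
      · intro x hx hxC
        exact absurd (hadd X' x (mem_sdiff.1 hx).2 hxC) (not_lt.2 (hcon x hx).2.1)
  · rintro ⟨u, hr, ho, hz⟩
    exact ⟨pathIndependent_of hC (hr.substitutes hC ho) (hr.irrelevance hC),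
      hr.lawOfAggregateDemand hC hz⟩
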